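/- arXiv:2007.00132 — 3 statements merged into one kernel-verified Lean document; each statement's English description precedes it below -/
import Mathlib

section
/- Let K ≥ 1 be an integer, P a real n×n̄ matrix, S_1,…,S_K symmetric positive semidefinite n̄×n̄ matrices with S_1+⋯+S_K positive definite, and 𝒯 ⊆ ℝ_{≥0}^K a nonempty convex compact monotone set containing a point with all coordinates positive. Let A be a symmetric n×n matrix, b ∈ ℝ^n, s > 0, and set Q = PᵀAP, q = Pᵀb, Q_+ = [[Q, q],[qᵀ, 0]]. Then Opt[s] ≤ Opt_*[κ·s] with κ = 3·ln(6K), where Opt[s] = inf{ s·φ_𝒯(λ) + μ : λ ∈ ℝ^K, λ ≥ 0, μ ≥ 0, Q_+ ⪯ BlockDiag(∑_k λ_k S_k, μ) } and Opt_*[s'] = sup{ xᵀAx + 2bᵀx : x ∈ 𝒳[s'] }. -/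
open Matrix BigOperators

noncomputable section

/-- The ellitope `𝒳[s]`: image under `z ↦ P z` of the set of `z` with
`zᵀ S_k z ≤ s t_k` for some `t ∈ 𝒯`. -/
def ellitope {n nb K : ℕ} (P : Matrix (Fin n) (Fin nb) ℝ)
    (S : Fin K → Matrix (Fin nb) (Fin nb) ℝ) (T : Set (Fin K → ℝ)) (s : ℝ) :
    Set (Fin n → ℝ) :=
  {x | ∃ z : Fin nb → ℝ, ∃ t ∈ T, x = P *ᵥ z ∧ ∀ k, z ⬝ᵥ (S k) *ᵥ z ≤ s * t k}

/-- Support function `φ_𝒯(λ) = max_{t ∈ 𝒯} λᵀ t`. -/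
def suppFn {K : ℕ} (T : Set (Fin K → ℝ)) (lam : Fin K → ℝ) : ℝ :=
  sSup ((fun t => ∑ k, lam k * t k) '' T)

/-- `Q_+ = [[Q, q],[qᵀ, 0]]`. -/
def qPlus {m : ℕ} (Q : Matrix (Fin m) (Fin m) ℝ) (q : Fin m → ℝ) :
    Matrix (Fin m ⊕ Unit) (Fin m ⊕ Unit) ℝ :=
  Matrix.fromBlocks Q (Matrix.of fun i _ => q i) (Matrix.of fun _ j => q j) 0

/-- `BlockDiag(M, μ)`. -/
def blockDiagOne {m : ℕ} (M : Matrix (Fin m) (Fin m) ℝ) (μ : ℝ) :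
    Matrix (Fin m ⊕ Unit) (Fin m ⊕ Unit) ℝ :=
  Matrix.fromBlocks M 0 0 (Matrix.of fun _ _ => μ)

/-- Lagrange multipliers for a convex program satisfying the Slater condition. -/
theorem exists_lagrange_multipliers_of_slater {E J : Type*} [AddCommGroup E] [Module ℝ E]
    [Fintype J]
    {X : Set E} {g : J → E → ℝ} {h : E → ℝ} {M : ℝ}
    (hg : ∀ j, ConvexOn ℝ X (g j)) (hh : ConcaveOn ℝ X h)
    (hM : ∀ x ∈ X, (∀ j, g j x ≤ 0) → h x ≤ M)
    {x₀ : E} (hx₀ : x₀ ∈ X) (hslater : ∀ j, g j x₀ < 0) :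
    ∃ lam : J → ℝ, (∀ j, 0 ≤ lam j) ∧ ∀ x ∈ X, h x ≤ M + ∑ j, lam j * g j x := by
  classical
  let G : Set ((J → ℝ) × ℝ) := {p | ∃ x ∈ X, (∀ j, g j x ≤ p.1 j) ∧ p.2 ≤ h x}
  let N : Set ((J → ℝ) × ℝ) := {p | (∀ j, p.1 j < 0) ∧ M < p.2}
  have hNopen : IsOpen N := by
    have : N = (⋂ j, {p | p.1 j < 0}) ∩ {p | M < p.2} := by
      ext p; simp [N]
    rw [this]
    exact (isOpen_iInter_of_finite fun j => isOpen_lt (by fun_prop) (by fun_prop)).inter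
      (isOpen_lt (by fun_prop) (by fun_prop))
  have hNconv : Convex ℝ N := by
    rintro p ⟨hp, hp'⟩ q ⟨hq, hq'⟩ a b ha hb hab
    refine ⟨fun j => ?_, ?_⟩
    · exact (convex_Iio (0 : ℝ)) (hp j) (hq j) ha hb hab
    · exact (convex_Ioi M) hp' hq' ha hb hab
  have hGconv : Convex ℝ G := by
    rintro p ⟨x, hx, hp, hp'⟩ q ⟨y, hy, hq, hq'⟩ a b ha hb hab
    refine ⟨a • x + b • y, hh.1 hx hy ha hb hab, fun j => ?_, ?_⟩
    · refine ((hg j).2 hx hy ha hb hab).trans ?_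
      simp only [Prod.fst_add, Prod.smul_fst, Pi.add_apply, Pi.smul_apply, smul_eq_mul]
      gcongr
      exacts [hp j, hq j]
    · refine le_trans ?_ (hh.2 hx hy ha hb hab)
      simp only [Prod.snd_add, Prod.smul_snd, smul_eq_mul]
      gcongr
  have hdisj : Disjoint N G := by
    rw [Set.disjoint_left]
    rintro p ⟨hp, hp'⟩ ⟨x, hx, hxp, hxp'⟩
    linarith [hM x hx fun j => (hxp j).trans (hp j).le]
  obtain ⟨f, c, hfN, hfG⟩ := geometric_hahn_banach_open hNconv hNopen hGconv hdisj
  set lam : J → ℝ := fun j => f (Pi.single j 1, 0) with hlam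
  set ρ : ℝ := f (0, 1) with hρ
  have hf : ∀ u r, f (u, r) = ∑ j, lam j * u j + ρ * r := by
    intro u r
    have h1 : (u, r) = ∑ j, u j • ((Pi.single j 1, 0) : (J → ℝ) × ℝ) +
        r • ((0, 1) : (J → ℝ) × ℝ) := by
      ext j
      · simp [Prod.fst_sum, Finset.sum_apply, Pi.single_apply]
      · simp [Prod.snd_sum]
    rw [h1, map_add, map_sum]
    simp only [map_smul, smul_eq_mul, hlam, hρ, mul_comm]
  have hrec : ∀ a d : ℝ, (∀ t : ℝ, 0 ≤ t → c ≤ a + t * d) → 0 ≤ d := by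
    intro a d H
    by_contra! hd
    have h0 := H 0 le_rfl
    have := H ((a - c + 1) / (-d)) (div_nonneg (by linarith) (by linarith))
    have e : (a - c + 1) / (-d) * d = -(a - c + 1) := by field_simp [hd.ne]
    linarith
  have hlam0 : ∀ j, 0 ≤ lam j := by
    intro j
    refine hrec (f (fun i => g i x₀, h x₀)) _ fun t ht => ?_
    have := hfG ((fun i => g i x₀, h x₀) + t • (Pi.single j 1, 0))
      ⟨x₀, hx₀, fun i => ?_, by simp⟩
    · rwa [map_add, map_smul, smul_eq_mul] at this
    · by_cases hij : i = j
      · subst hij; simpa using ht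
      · simp [hij]
  have hρneg : ρ < 0 := by
    have h1 : 0 ≤ -ρ := by
      refine hrec (f (fun i => g i x₀, h x₀)) _ fun t ht => ?_
      have := hfG (fun i => g i x₀, h x₀ - t) ⟨x₀, hx₀, fun i => le_rfl, by simpa using ht⟩
      rw [hf] at this ⊢
      linarith
    rcases h1.lt_or_eq with h1 | h1
    · linarith
    · have hρ0 : ρ = 0 := by linarith
      have h2 := hfN (fun i => g i x₀, M + 1) ⟨hslater, by simp⟩
      have h3 := hfG (fun i => g i x₀, h x₀) ⟨x₀, hx₀, fun i => le_rfl, le_rfl⟩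
      rw [hf, hρ0] at h2 h3
      linarith
  have hcM : ρ * M ≤ c := by
    by_contra! hlt
    have hS : 0 ≤ ∑ j, lam j := Finset.sum_nonneg fun j _ => hlam0 j
    have hD : 0 < ∑ j, lam j - ρ := by linarith
    have hε : 0 < (ρ * M - c) / (∑ j, lam j - ρ) := div_pos (by linarith) hD
    set ε := (ρ * M - c) / (∑ j, lam j - ρ) with hεdef
    have h2 := hfN (fun _ => -ε, M + ε) ⟨fun j => by simpa using hε, by simpa using hε⟩
    rw [hf, ← Finset.sum_mul] at h2
    have : ε * (∑ j, lam j - ρ) = ρ * M - c := by rw [hεdef]; field_simp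
    linarith
  refine ⟨fun j => lam j / (-ρ), fun j => div_nonneg (hlam0 j) (by linarith), fun x hx => ?_⟩
  have h3 := hfG (fun i => g i x, h x) ⟨x, hx, fun i => le_rfl, le_rfl⟩
  rw [hf] at h3
  have h4 : ∑ j, lam j / (-ρ) * g j x = (∑ j, lam j * g j x) / (-ρ) := by
    rw [Finset.sum_div]; exact Finset.sum_congr rfl fun j _ => by ring
  rw [h4, ← sub_le_iff_le_add', le_div_iff₀ (by linarith)]
  linarith

/-- The real sign `±1` encoded by a Boolean. -/
def boolSign (b : Bool) : ℝ := if b then 1 else -1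

theorem boolSign_not (b : Bool) : boolSign (!b) = -boolSign b := by
  cases b <;> simp [boolSign]

theorem boolSign_mul_self (b : Bool) : boolSign b * boolSign b = 1 := by
  cases b <;> simp [boolSign]

section Rademacher

variable {ι : Type*}

/-- The signed sum `∑_{i ∈ s} ε_i a_i`. -/
def signedSum (s : Finset ι) (a : ι → ℝ) (ε : ι → Bool) : ℝ :=
  ∑ i ∈ s, a i * boolSign (ε i)

theorem signedSum_compl (s : Finset ι) (a : ι → ℝ) (ε : ι → Bool) :
    signedSum s a (fun i => !ε i) = -signedSum s a ε := by
  simp [signedSum, boolSign_not]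

variable [Fintype ι] [DecidableEq ι]

theorem sum_comp_neg_signedSum (s : Finset ι) (a : ι → ℝ) (F : ℝ → ℝ) :
    ∑ ε : ι → Bool, F (-signedSum s a ε) = ∑ ε : ι → Bool, F (signedSum s a ε) := by
  have hinv : Function.Involutive (fun (ε : ι → Bool) i => !ε i) := fun ε => by simp
  rw [← Equiv.sum_comp hinv.toPerm]
  exact Finset.sum_congr rfl fun ε _ => by
    simp [Function.Involutive.coe_toPerm, signedSum_compl]

theorem two_mul_sum_comp_signedSum_insert {s : Finset ι} {i : ι} (hi : i ∉ s) (a : ι → ℝ)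
    (F : ℝ → ℝ) :
    2 * ∑ ε : ι → Bool, F (signedSum (insert i s) a ε) =
      ∑ ε : ι → Bool, F (a i + signedSum s a ε) + ∑ ε : ι → Bool, F (-a i + signedSum s a ε) := by
  have hinv : Function.Involutive (fun (ε : ι → Bool) => Function.update ε i (!ε i)) := fun ε => by
    simp
  have hflip : ∀ ε : ι → Bool, signedSum (insert i s) a (Function.update ε i (!ε i)) =
      -(a i * boolSign (ε i)) + signedSum s a ε := by
    intro ε
    rw [signedSum, Finset.sum_insert hi, signedSum]
    congr 1
    · simp [boolSign_not]
    · refine Finset.sum_congr rfl fun j hj => ?_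
      rw [Function.update_of_ne (by rintro rfl; exact hi hj)]
  rw [two_mul]
  conv_lhs => enter [2]; rw [← Equiv.sum_comp hinv.toPerm]
  rw [← Finset.sum_add_distrib, ← Finset.sum_add_distrib]
  refine Finset.sum_congr rfl fun ε _ => ?_
  rw [Function.Involutive.coe_toPerm, hflip, signedSum, Finset.sum_insert hi, ← signedSum]
  cases ε i
  · simp [boolSign, add_comm]
  · simp [boolSign]

theorem sum_add_signedSum_sq (s : Finset ι) (a : ι → ℝ) (x : ℝ) :
    ∑ ε : ι → Bool, (x + signedSum s a ε) ^ 2 =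
      Fintype.card (ι → Bool) * (x ^ 2 + ∑ i ∈ s, a i ^ 2) := by
  induction s using Finset.induction_on generalizing x with
  | empty => simp [signedSum]
  | insert i s hi ih =>
    have h := two_mul_sum_comp_signedSum_insert hi a fun y => (x + y) ^ 2
    simp only [← add_assoc] at h
    rw [ih, ih] at h
    rw [Finset.sum_insert hi]
    linarith

theorem sum_exp_signedSum (s : Finset ι) (a : ι → ℝ) :
    ∑ ε : ι → Bool, Real.exp (signedSum s a ε) =
      Fintype.card (ι → Bool) * ∏ i ∈ s, Real.cosh (a i) := by
  induction s using Finset.induction_on with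
  | empty => simp [signedSum]
  | insert i s hi ih =>
    have h := two_mul_sum_comp_signedSum_insert hi a Real.exp
    simp only [Real.exp_add, ← Finset.mul_sum] at h
    rw [ih] at h
    rw [Finset.prod_insert hi, Real.cosh_eq]
    linarith

/-- The indicator of `[-1, 1]`. -/
def unitInd (x : ℝ) : ℝ := if |x| ≤ 1 then 1 else 0

theorem one_sub_sq_div_le_unitInd_add {x : ℝ} (hx : |x| ≤ 1) (y : ℝ) :
    1 - y ^ 2 / (1 + |x|) ^ 2 ≤ unitInd (x + y) + unitInd (x + -y) := by
  have h0 : ∀ z, 0 ≤ unitInd z := fun z => by unfold unitInd; split_ifs <;> simp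
  have hpos : 0 < 1 + |x| := by positivity
  by_cases hy : |y| ≤ 1 + |x|
  · have h2 : 0 ≤ y ^ 2 / (1 + |x|) ^ 2 := by positivity
    have h1 : |x + y| ≤ 1 ∨ |x + -y| ≤ 1 := by
      rcases abs_cases x with ⟨e, _⟩ | ⟨e, _⟩ <;> rcases abs_cases y with ⟨e', _⟩ | ⟨e', _⟩ <;>
        rw [e] at hx hy <;> rw [e'] at hy
      · right; rw [abs_le]; constructor <;> linarith
      · left; rw [abs_le]; constructor <;> linarith
      · left; rw [abs_le]; constructor <;> linarith
      · right; rw [abs_le]; constructor <;> linarith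
    rcases h1 with h1 | h1
    · have : unitInd (x + y) = 1 := if_pos h1
      linarith [h0 (x + -y)]
    · have : unitInd (x + -y) = 1 := if_pos h1
      linarith [h0 (x + y)]
  · push Not at hy
    have : 1 ≤ y ^ 2 / (1 + |x|) ^ 2 := by
      rw [one_le_div (by positivity), ← sq_abs y]
      gcongr
    linarith [h0 (x + y), h0 (x + -y)]

theorem card_le_three_mul_sum_unitInd_add (s : Finset ι) (a : ι → ℝ) {m x : ℝ}
    (ha : ∀ i ∈ s, |a i| ≤ m) (hm0 : 0 ≤ m) (hm : m ^ 2 + ∑ i ∈ s, a i ^ 2 ≤ 1) (hx : |x| ≤ 1) :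
    (Fintype.card (ι → Bool) : ℝ) ≤ 3 * ∑ ε : ι → Bool, unitInd (x + signedSum s a ε) := by
  induction s using Finset.induction_on generalizing x with
  | empty =>
    have : (0 : ℝ) ≤ Fintype.card (ι → Bool) := by positivity
    simp only [signedSum, unitInd, Finset.sum_empty, add_zero, hx, if_true, Finset.sum_const,
      Finset.card_univ, nsmul_eq_mul, mul_one]
    linarith
  | insert i s hi ih =>
    by_cases hxi : |x| + |a i| ≤ 1
    · have h := two_mul_sum_comp_signedSum_insert hi a fun y => unitInd (x + y)
      simp only [← add_assoc] at h
      have hm' : m ^ 2 + ∑ i ∈ s, a i ^ 2 ≤ 1 := by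
        rw [Finset.sum_insert hi] at hm
        nlinarith [sq_nonneg (a i)]
      have ha' : ∀ j ∈ s, |a j| ≤ m := fun j hj => ha j (Finset.mem_insert_of_mem hj)
      have h1 := ih ha' hm' (x := x + a i) ((abs_add_le _ _).trans hxi)
      have h2 := ih ha' hm' (x := x + -a i) ((abs_add_le _ _).trans (by rwa [abs_neg]))
      linarith
    · push Not at hxi
      have hsum : ∑ ε : ι → Bool, (1 - signedSum (insert i s) a ε ^ 2 / (1 + |x|) ^ 2) ≤
          ∑ ε : ι → Bool, (unitInd (x + signedSum (insert i s) a ε) +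
            unitInd (x + -signedSum (insert i s) a ε)) :=
        Finset.sum_le_sum fun ε _ => one_sub_sq_div_le_unitInd_add hx _
      have hsq := sum_add_signedSum_sq (insert i s) a 0
      simp only [zero_add] at hsq
      rw [Finset.sum_add_distrib,
        sum_comp_neg_signedSum (insert i s) a fun y => unitInd (x + y),
        Finset.sum_sub_distrib, ← Finset.sum_div, hsq] at hsum
      simp only [Finset.sum_const, Finset.card_univ, nsmul_eq_mul, mul_one] at hsum
      have hquot : (0 ^ 2 + ∑ i ∈ insert i s, a i ^ 2) / (1 + |x|) ^ 2 ≤ 1 / 3 := by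
        have hmi := ha i (Finset.mem_insert_self i s)
        have h0 : 0 ≤ ∑ i ∈ insert i s, a i ^ 2 := Finset.sum_nonneg fun _ _ => sq_nonneg _
        have hm1 : m ≤ 1 := by nlinarith
        have : (2 - m) ^ 2 ≤ (1 + |x|) ^ 2 := by
          have : 0 ≤ 2 - m := by linarith
          gcongr; linarith
        rw [div_le_iff₀ (by positivity)]
        nlinarith [sq_nonneg (2 * m - 1)]
      have hN : (0 : ℝ) ≤ Fintype.card (ι → Bool) := by positivity
      rw [mul_div_assoc] at hsum
      have := mul_le_mul_of_nonneg_left hquot hN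
      linarith

/-- A Rademacher sum of variance at most one lies in `[-1, 1]` with probability at least `1/3`. -/
theorem card_le_three_mul_sum_unitInd (a : ι → ℝ) (ha : ∑ i, a i ^ 2 ≤ 1) :
    (Fintype.card (ι → Bool) : ℝ) ≤ 3 * ∑ ε : ι → Bool, unitInd (signedSum Finset.univ a ε) := by
  rcases isEmpty_or_nonempty ι with hι | hι
  · simp [signedSum, unitInd]
  · obtain ⟨i, hi⟩ := Finite.exists_max fun i => |a i|
    have hnot : i ∉ Finset.univ.erase i := Finset.notMem_erase _ _
    have hins : insert i (Finset.univ.erase i) = Finset.univ :=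
      Finset.insert_erase (Finset.mem_univ i)
    have hm : |a i| ^ 2 + ∑ j ∈ Finset.univ.erase i, a j ^ 2 ≤ 1 := by
      rwa [sq_abs, ← Finset.sum_insert (f := fun j => a j ^ 2) hnot, hins]
    have h1 : |a i| ≤ 1 := by
      have : 0 ≤ ∑ j ∈ Finset.univ.erase i, a j ^ 2 := Finset.sum_nonneg fun _ _ => sq_nonneg _
      nlinarith [abs_nonneg (a i)]
    have h := two_mul_sum_comp_signedSum_insert hnot a unitInd
    rw [hins] at h
    have h2 := card_le_three_mul_sum_unitInd_add _ a (fun j _ => hi j) (abs_nonneg _) hm h1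
    have h3 := card_le_three_mul_sum_unitInd_add _ a (fun j _ => hi j) (abs_nonneg _) hm
      (x := -a i) (by rwa [abs_neg])
    linarith

theorem integral_exp_neg_three_quarters_sq_add_mul (x : ℝ) :
    ∫ y : ℝ, Real.exp (-(3 / 4) * y ^ 2 + y * x) =
      √(Real.pi / (3 / 4)) * Real.exp (x ^ 2 / 3) := by
  have h : ∀ y : ℝ, Real.exp (-(3 / 4) * y ^ 2 + y * x) =
      Real.exp (-(3 / 4) * (y - 2 / 3 * x) ^ 2) * Real.exp (x ^ 2 / 3) := by
    intro y; rw [← Real.exp_add]; ring_nf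
  simp_rw [h]
  rw [MeasureTheory.integral_mul_const,
    MeasureTheory.integral_sub_right_eq_self (fun y => Real.exp (-(3 / 4) * y ^ 2)),
    integral_gaussian]

theorem integrable_exp_neg_three_quarters_sq_add_mul (x : ℝ) :
    MeasureTheory.Integrable fun y : ℝ => Real.exp (-(3 / 4) * y ^ 2 + y * x) := by
  have h : (fun y : ℝ => Real.exp (-(3 / 4) * y ^ 2 + y * x)) = fun y =>
      Real.exp (-(3 / 4) * (y - 2 / 3 * x) ^ 2) * Real.exp (x ^ 2 / 3) := by
    ext y; rw [← Real.exp_add]; ring_nf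
  rw [h]
  exact ((integrable_exp_neg_mul_sq (b := 3 / 4) (by norm_num)).comp_sub_right _).mul_const _

theorem sum_exp_signedSum_sq_div_three_le (a : ι → ℝ) (ha : ∑ i, a i ^ 2 ≤ 1) :
    ∑ ε : ι → Bool, Real.exp (signedSum Finset.univ a ε ^ 2 / 3) ≤
      √3 * Fintype.card (ι → Bool) := by
  set N : ℝ := (Fintype.card (ι → Bool) : ℝ)
  have hpt : ∀ y : ℝ, ∑ ε : ι → Bool, Real.exp (-(3 / 4) * y ^ 2 + y * signedSum Finset.univ a ε) ≤
      N * Real.exp (-(1 / 4) * y ^ 2) := by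
    intro y
    have h1 : ∀ ε : ι → Bool, y * signedSum Finset.univ a ε =
        signedSum Finset.univ (fun i => y * a i) ε := fun ε => by
      simp [signedSum, Finset.mul_sum, mul_assoc]
    simp_rw [Real.exp_add, h1, ← Finset.mul_sum]
    rw [sum_exp_signedSum]
    have h2 : ∏ i, Real.cosh (y * a i) ≤ Real.exp (y ^ 2 / 2) := by
      calc ∏ i, Real.cosh (y * a i) ≤ ∏ i, Real.exp ((y * a i) ^ 2 / 2) :=
            Finset.prod_le_prod (fun i _ => (Real.cosh_pos _).le)
              fun i _ => Real.cosh_le_exp_half_sq _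
        _ = Real.exp (y ^ 2 / 2 * ∑ i, a i ^ 2) := by
            rw [← Real.exp_sum, Finset.mul_sum]
            congr 1
            exact Finset.sum_congr rfl fun i _ => by ring
        _ ≤ Real.exp (y ^ 2 / 2) := by
            apply Real.exp_le_exp.2
            nlinarith [sq_nonneg y]
    have h3 : Real.exp (-(1 / 4) * y ^ 2) = Real.exp (-(3 / 4) * y ^ 2) * Real.exp (y ^ 2 / 2) := by
      rw [← Real.exp_add]; ring_nf
    rw [h3]
    calc _ ≤ Real.exp (-(3 / 4) * y ^ 2) * (N * Real.exp (y ^ 2 / 2)) := by gcongr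
      _ = _ := by ring
  have hint := MeasureTheory.integral_mono (μ := MeasureTheory.volume)
    (MeasureTheory.integrable_finsetSum Finset.univ fun ε _ =>
      integrable_exp_neg_three_quarters_sq_add_mul (signedSum Finset.univ a ε))
    ((integrable_exp_neg_mul_sq (b := 1 / 4) (by norm_num)).const_mul N) hpt
  rw [MeasureTheory.integral_finsetSum _ fun ε _ =>
      integrable_exp_neg_three_quarters_sq_add_mul (signedSum Finset.univ a ε),
    MeasureTheory.integral_const_mul, integral_gaussian] at hint
  simp_rw [integral_exp_neg_three_quarters_sq_add_mul, ← Finset.mul_sum] at hint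
  have hsq : √(Real.pi / (1 / 4)) = √(Real.pi / (3 / 4)) * √3 := by
    rw [← Real.sqrt_mul (by positivity)]; congr 1; ring
  rw [hsq] at hint
  refine le_of_mul_le_mul_left (hint.trans_eq ?_) (Real.sqrt_pos.2 (by positivity :
    0 < Real.pi / (3 / 4)))
  ring

theorem sum_exp_sum_signedSum_sq_le {J : Type*} [Fintype J] (g : J → ι → ℝ) {c : ℝ} (hc : 0 < c)
    (hg : ∑ j, ∑ i, g j i ^ 2 = c) :
    ∑ ε : ι → Bool, Real.exp ((∑ j, signedSum Finset.univ (g j) ε ^ 2) / (3 * c)) ≤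
      √3 * Fintype.card (ι → Bool) := by
  set ν : J → ℝ := fun j => ∑ i, g j i ^ 2 with hν
  have hν0 : ∀ j, 0 ≤ ν j := fun j => Finset.sum_nonneg fun _ _ => sq_nonneg _
  set f : J → ι → ℝ := fun j i => g j i / √(ν j) with hf
  have hgf : ∀ j i, g j i = √(ν j) * f j i := by
    intro j i
    rcases (hν0 j).lt_or_eq with h | h
    · have := Real.sqrt_pos.2 h
      simp only [hf]; field_simp
    · have := (Finset.sum_eq_zero_iff_of_nonneg fun i _ => sq_nonneg (g j i)).1 h.symm i
        (Finset.mem_univ i)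
      simp [hf, pow_eq_zero_iff two_ne_zero |>.1 this]
  have hf1 : ∀ j, ∑ i, f j i ^ 2 ≤ 1 := by
    intro j
    simp only [hf, div_pow, Real.sq_sqrt (hν0 j), ← Finset.sum_div]
    exact div_self_le_one _
  have hw : ∑ j, ν j / c = 1 := by rw [← Finset.sum_div, hg, div_self hc.ne']
  have hpt : ∀ ε : ι → Bool, Real.exp ((∑ j, signedSum Finset.univ (g j) ε ^ 2) / (3 * c)) ≤
      ∑ j, ν j / c * Real.exp (signedSum Finset.univ (f j) ε ^ 2 / 3) := by
    intro ε
    have h := convexOn_exp.map_sum_le (t := Finset.univ) (w := fun j => ν j / c)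
      (p := fun j => signedSum Finset.univ (f j) ε ^ 2 / 3) (fun j _ => div_nonneg (hν0 j) hc.le) hw
      (fun _ _ => Set.mem_univ _)
    simp only [smul_eq_mul] at h
    refine le_of_eq_of_le ?_ h
    congr 1
    rw [Finset.sum_div]
    refine Finset.sum_congr rfl fun j _ => ?_
    have : signedSum Finset.univ (g j) ε = √(ν j) * signedSum Finset.univ (f j) ε := by
      simp only [signedSum, Finset.mul_sum, ← mul_assoc, ← hgf]
    rw [this, mul_pow, Real.sq_sqrt (hν0 j)]
    field_simp
  calc _ ≤ ∑ ε : ι → Bool, ∑ j, ν j / c * Real.exp (signedSum Finset.univ (f j) ε ^ 2 / 3) :=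
        Finset.sum_le_sum fun ε _ => hpt ε
    _ = ∑ j, ν j / c * ∑ ε : ι → Bool, Real.exp (signedSum Finset.univ (f j) ε ^ 2 / 3) := by
        rw [Finset.sum_comm]; simp_rw [Finset.mul_sum]
    _ ≤ ∑ j, ν j / c * (√3 * Fintype.card (ι → Bool)) :=
        Finset.sum_le_sum fun j _ => mul_le_mul_of_nonneg_left
          (sum_exp_signedSum_sq_div_three_le _ (hf1 j)) (div_nonneg (hν0 j) hc.le)
    _ = _ := by rw [← Finset.sum_mul, hw, one_mul]

theorem sum_large_sum_signedSum_sq_le {J : Type*} [Fintype J] (g : J → ι → ℝ) {c α : ℝ}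
    (hα : 1 ≤ α) (hg : ∑ j, ∑ i, g j i ^ 2 ≤ c) :
    ∑ ε : ι → Bool, (if ∑ j, signedSum Finset.univ (g j) ε ^ 2 ≤ 3 * Real.log α * c then (0 : ℝ)
      else 1) ≤ √3 * Fintype.card (ι → Bool) / α := by
  have hα0 : 0 < α := by linarith
  have hlog : 0 ≤ Real.log α := Real.log_nonneg hα
  rcases (Finset.sum_nonneg fun j _ => Finset.sum_nonneg fun i _ => sq_nonneg (g j i) :
    0 ≤ ∑ j, ∑ i, g j i ^ 2).lt_or_eq with hpos | hzero
  · set c' := ∑ j, ∑ i, g j i ^ 2 with hc'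
    rw [le_div_iff₀ hα0, Finset.sum_mul]
    refine le_trans (Finset.sum_le_sum fun ε _ => ?_) (sum_exp_sum_signedSum_sq_le g hpos hc'.symm)
    split_ifs with h
    · simpa using (Real.exp_pos _).le
    · rw [one_mul, ← Real.log_le_iff_le_exp hα0, le_div_iff₀ (by positivity)]
      push Not at h
      have := mul_le_mul_of_nonneg_left hg hlog
      linarith
  · have hc : 0 ≤ c := hzero.le.trans hg
    have hgz : ∀ j i, g j i = 0 := by
      intro j i
      have h1 := (Finset.sum_eq_zero_iff_of_nonneg fun j _ =>
        Finset.sum_nonneg fun i _ => sq_nonneg (g j i)).1 hzero.symm j (Finset.mem_univ j)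
      have h2 := (Finset.sum_eq_zero_iff_of_nonneg fun i _ => sq_nonneg (g j i)).1 h1 i
        (Finset.mem_univ i)
      exact pow_eq_zero_iff two_ne_zero |>.1 h2
    have hX : ∀ ε : ι → Bool, ∑ j, signedSum Finset.univ (g j) ε ^ 2 ≤ 3 * Real.log α * c := by
      intro ε
      simp only [signedSum, hgz, zero_mul, Finset.sum_const_zero, ne_eq, OfNat.ofNat_ne_zero,
        not_false_eq_true, zero_pow]
      positivity
    simp only [hX, if_true, Finset.sum_const_zero]
    positivity

theorem exists_signs_forall_le {J : Type*} [Fintype J] {K : ℕ} (hK : 1 ≤ K)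
    (a : ι → ℝ) (ha : ∑ i, a i ^ 2 ≤ 1) (g : Fin K → J → ι → ℝ) (c : Fin K → ℝ)
    (hg : ∀ k, ∑ j, ∑ i, g k j i ^ 2 ≤ c k) :
    ∃ ε : ι → Bool, |signedSum Finset.univ a ε| ≤ 1 ∧
      ∀ k, ∑ j, signedSum Finset.univ (g k j) ε ^ 2 ≤ 3 * Real.log (6 * K) * c k := by
  by_contra! hcon
  have hK' : (1 : ℝ) ≤ K := by exact_mod_cast hK
  have hbad0 : ∀ (k : Fin K) (ε : ι → Bool),
      (0 : ℝ) ≤ if ∑ j, signedSum Finset.univ (g k j) ε ^ 2 ≤ 3 * Real.log (6 * K) * c k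
        then (0 : ℝ) else 1 := fun k ε => by split_ifs <;> simp
  have hpt : ∀ ε : ι → Bool, unitInd (signedSum Finset.univ a ε) ≤
      ∑ k, if ∑ j, signedSum Finset.univ (g k j) ε ^ 2 ≤ 3 * Real.log (6 * K) * c k
        then (0 : ℝ) else 1 := by
    intro ε
    unfold unitInd
    split_ifs with h
    · obtain ⟨k, hk⟩ := hcon ε h
      refine le_trans ?_ (Finset.single_le_sum (fun k _ => hbad0 k ε) (Finset.mem_univ k))
      rw [if_neg hk.not_ge]
    · exact Finset.sum_nonneg fun k _ => hbad0 k ε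
  have h1 := Finset.sum_le_sum fun ε (_ : ε ∈ Finset.univ) => hpt ε
  rw [Finset.sum_comm] at h1
  have h2 := h1.trans (Finset.sum_le_sum fun k _ =>
    sum_large_sum_signedSum_sq_le (g k) (α := 6 * K) (by linarith) (hg k))
  rw [Finset.sum_const, Finset.card_univ, Fintype.card_fin, nsmul_eq_mul] at h2
  have h3 := card_le_three_mul_sum_unitInd a ha
  have hN : (0 : ℝ) < Fintype.card (ι → Bool) := by exact_mod_cast Fintype.card_pos
  have h4 : (K : ℝ) * (√3 * Fintype.card (ι → Bool) / (6 * K)) =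
      √3 * Fintype.card (ι → Bool) / 6 := by
    field_simp
  rw [h4] at h2
  have h5 : √3 < 2 := by rw [Real.sqrt_lt' (by norm_num)]; norm_num
  nlinarith

end Rademacher

theorem exists_transpose_mul_self_eq {m : Type*} [Fintype m] [DecidableEq m] {M : Matrix m m ℝ}
    (hM : M.PosSemidef) : ∃ B : Matrix m m ℝ, M = Bᵀ * B := by
  open scoped MatrixOrder in
  obtain ⟨B, hB⟩ := CStarAlgebra.nonneg_iff_eq_star_mul_self.mp hM.nonneg
  exact ⟨B, by simpa [star_eq_conjTranspose] using hB⟩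

theorem exists_mul_transpose_eq_and_diagonal {m : Type*} [Fintype m] [DecidableEq m]
    {W Q : Matrix m m ℝ} (hW : W.PosSemidef) (hQ : Q.IsSymm) :
    ∃ (L : Matrix m m ℝ) (d : m → ℝ), W = L * Lᵀ ∧ Lᵀ * Q * L = diagonal d := by
  obtain ⟨B, hB⟩ := exists_transpose_mul_self_eq hW
  have hH : (B * Q * Bᵀ).IsHermitian := by
    rw [IsHermitian, conjTranspose_eq_transpose_of_trivial]
    simp [transpose_mul, hQ.eq, Matrix.mul_assoc]
  set U : Matrix m m ℝ := (hH.eigenvectorUnitary : Matrix m m ℝ)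
  have hUU : U * Uᵀ = 1 := by
    have := Unitary.coe_mul_star_self hH.eigenvectorUnitary
    simpa [star_eq_conjTranspose] using this
  have hUU' : Uᵀ * U = 1 := by
    have := Unitary.coe_star_mul_self hH.eigenvectorUnitary
    simpa [star_eq_conjTranspose] using this
  have hspec : B * Q * Bᵀ = U * diagonal hH.eigenvalues * Uᵀ := by
    have := hH.spectral_theorem
    rw [Unitary.conjStarAlgAut_apply] at this
    simpa [star_eq_conjTranspose, Function.comp_def] using this
  refine ⟨Bᵀ * U, hH.eigenvalues, ?_, ?_⟩
  · rw [transpose_mul, transpose_transpose, Matrix.mul_assoc, ← Matrix.mul_assoc U, hUU,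
      Matrix.one_mul, hB]
  · have : (Bᵀ * U)ᵀ * Q * (Bᵀ * U) = Uᵀ * (B * Q * Bᵀ) * U := by
      simp only [transpose_mul, transpose_transpose, Matrix.mul_assoc]
    rw [this]
    calc Uᵀ * (B * Q * Bᵀ) * U
        = Uᵀ * (U * diagonal hH.eigenvalues * Uᵀ) * U := congrArg (Uᵀ * · * U) hspec
      _ = (Uᵀ * U) * diagonal hH.eigenvalues * (Uᵀ * U) := by simp only [Matrix.mul_assoc]
      _ = _ := by rw [hUU', Matrix.one_mul, Matrix.mul_one]

theorem mulVec_dotProduct_mulVec_mulVec {m n : Type*} [Fintype m] [Fintype n] (P : Matrix n m ℝ)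
    (A : Matrix n n ℝ) (z : m → ℝ) : (P *ᵥ z) ⬝ᵥ A *ᵥ (P *ᵥ z) = z ⬝ᵥ (Pᵀ * A * P) *ᵥ z := by
  rw [dotProduct_comm, dotProduct_mulVec, dotProduct_comm, ← mulVec_transpose]
  simp only [mulVec_mulVec, Matrix.mul_assoc]

theorem dotProduct_mulVec_self_eq_trace_of_diagonal {m : Type*} [Fintype m] [DecidableEq m]
    {L Q : Matrix m m ℝ} {d : m → ℝ} (hd : Lᵀ * Q * L = diagonal d) {e : m → ℝ}
    (he : ∀ i, e i * e i = 1) :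
    (L *ᵥ e) ⬝ᵥ Q *ᵥ (L *ᵥ e) = (Q * (L * Lᵀ)).trace := by
  have h2 : (Q * (L * Lᵀ)).trace = (Lᵀ * Q * L).trace := by
    rw [← Matrix.mul_assoc, trace_mul_comm, Matrix.mul_assoc]
  rw [mulVec_dotProduct_mulVec_mulVec, h2, hd, trace_diagonal, dotProduct]
  refine Finset.sum_congr rfl fun i _ => ?_
  rw [mulVec_diagonal, mul_left_comm, he, mul_one]

theorem sumElim_dotProduct_qPlus_mulVec {m : ℕ} (Q : Matrix (Fin m) (Fin m) ℝ) (q z : Fin m → ℝ)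
    (τ : ℝ) :
    Sum.elim z (fun _ => τ) ⬝ᵥ qPlus Q q *ᵥ Sum.elim z (fun _ : Unit => τ) =
      z ⬝ᵥ Q *ᵥ z + 2 * τ * (q ⬝ᵥ z) := by
  have h1 : z ⬝ᵥ (Matrix.of fun i (_ : Unit) => q i) *ᵥ (fun _ => τ) = τ * (q ⬝ᵥ z) := by
    simp only [dotProduct, mulVec, of_apply, Finset.univ_unique, Finset.sum_singleton,
      Finset.mul_sum]
    exact Finset.sum_congr rfl fun i _ => by ring
  have h2 : (fun _ : Unit => τ) ⬝ᵥ (Matrix.of fun (_ : Unit) j => q j) *ᵥ z = τ * (q ⬝ᵥ z) := by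
    simp [dotProduct, mulVec]
  rw [qPlus, fromBlocks_mulVec, sumElim_dotProduct_sumElim]
  simp only [Sum.elim_comp_inl, Sum.elim_comp_inr, zero_mulVec, add_zero, dotProduct_add, h1, h2]
  ring

theorem sumElim_dotProduct_blockDiagOne_mulVec {m : ℕ} (M : Matrix (Fin m) (Fin m) ℝ)
    (z : Fin m → ℝ) (μ τ : ℝ) :
    Sum.elim z (fun _ => τ) ⬝ᵥ blockDiagOne M μ *ᵥ Sum.elim z (fun _ : Unit => τ) =
      z ⬝ᵥ M *ᵥ z + μ * τ ^ 2 := by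
  have h2 : (fun _ : Unit => τ) ⬝ᵥ (Matrix.of fun (_ : Unit) (_ : Unit) => μ) *ᵥ (fun _ => τ) =
      μ * τ ^ 2 := by
    simp [dotProduct, mulVec]; ring
  rw [blockDiagOne, fromBlocks_mulVec, sumElim_dotProduct_sumElim]
  simp only [Sum.elim_comp_inl, Sum.elim_comp_inr, zero_mulVec, add_zero, zero_add, h2]

theorem qPlus_isSymm {m : ℕ} {Q : Matrix (Fin m) (Fin m) ℝ} (hQ : Q.IsSymm) (q : Fin m → ℝ) :
    (qPlus Q q).IsSymm :=
  IsSymm.fromBlocks hQ (by ext; simp) (by simp [IsSymm])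

theorem trace_transpose_mul_self_eq {m n : Type*} [Fintype m] [Fintype n] (G : Matrix m n ℝ) :
    (Gᵀ * G).trace = ∑ j, ∑ i, G j i ^ 2 := by
  simp only [trace, diag_apply, mul_apply, transpose_apply, ← sq]
  exact Finset.sum_comm

/-- Rounding: a positive semidefinite matrix feasible for the relaxed problem yields a vector
feasible for the problem dilated by `3 log (6K)`, whose objective value is at least as large. -/
theorem exists_rounding {m K : ℕ} (hK : 1 ≤ K) {S : Fin K → Matrix (Fin m) (Fin m) ℝ}
    (hS : ∀ k, (S k).PosSemidef) {Q : Matrix (Fin m) (Fin m) ℝ} (hQ : Q.IsSymm) (q : Fin m → ℝ)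
    {W : Matrix (Fin m ⊕ Unit) (Fin m ⊕ Unit) ℝ} (hW : W.PosSemidef)
    (hW1 : W (Sum.inr ()) (Sum.inr ()) ≤ 1) {c : Fin K → ℝ}
    (hWc : ∀ k, (S k * W.submatrix Sum.inl Sum.inl).trace ≤ c k) :
    ∃ z : Fin m → ℝ, (∀ k, z ⬝ᵥ S k *ᵥ z ≤ 3 * Real.log (6 * K) * c k) ∧
      (qPlus Q q * W).trace ≤ z ⬝ᵥ Q *ᵥ z + 2 * (q ⬝ᵥ z) := by
  obtain ⟨L, d, hL, hd⟩ := exists_mul_transpose_eq_and_diagonal hW (qPlus_isSymm hQ q)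
  choose C hC using fun k => exists_transpose_mul_self_eq (hS k)
  set L₁ : Matrix (Fin m) (Fin m ⊕ Unit) ℝ := L.submatrix Sum.inl id with hL₁
  have hW11 : W.submatrix Sum.inl Sum.inl = L₁ * L₁ᵀ := by
    rw [hL]; ext i j; simp [hL₁, mul_apply]
  have ha : ∑ i, L (Sum.inr ()) i ^ 2 ≤ 1 := by
    refine le_of_eq_of_le ?_ hW1
    rw [hL]; simp only [mul_apply, transpose_apply, ← sq]
  have hg : ∀ k, ∑ j, ∑ i, (C k * L₁) j i ^ 2 ≤ c k := by
    intro k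
    refine le_of_eq_of_le ?_ (hWc k)
    rw [← trace_transpose_mul_self_eq, hW11, hC k, ← Matrix.mul_assoc _ L₁,
      trace_mul_comm ((C k)ᵀ * C k * L₁), transpose_mul]
    simp only [Matrix.mul_assoc]
  obtain ⟨ε, hτ, hε⟩ := exists_signs_forall_le hK _ ha (fun k => C k * L₁) c hg
  set e : Fin m ⊕ Unit → ℝ := fun i => boolSign (ε i) with he
  set z : Fin m → ℝ := L₁ *ᵥ e with hz
  set τ := signedSum Finset.univ (L (Sum.inr ())) ε with hτdef
  have hzS : ∀ k, z ⬝ᵥ S k *ᵥ z ≤ 3 * Real.log (6 * K) * c k := by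
    intro k
    refine le_of_eq_of_le ?_ (hε k)
    have h1 : z ⬝ᵥ S k *ᵥ z = (C k *ᵥ z) ⬝ᵥ (C k *ᵥ z) := by
      rw [hC k, ← mulVec_mulVec, dotProduct_mulVec, ← mulVec_transpose, transpose_transpose]
    rw [h1, hz, mulVec_mulVec, dotProduct]
    exact Finset.sum_congr rfl fun j _ => (sq _).symm
  have hLe : L *ᵥ e = Sum.elim z (fun _ => τ) := by
    ext i
    rcases i with i | i
    · rfl
    · rfl
  have hval : (qPlus Q q * W).trace = z ⬝ᵥ Q *ᵥ z + 2 * τ * (q ⬝ᵥ z) := by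
    rw [← sumElim_dotProduct_qPlus_mulVec, ← hLe, hL,
      dotProduct_mulVec_self_eq_trace_of_diagonal hd fun i => boolSign_mul_self (ε i)]
  rw [abs_le] at hτ
  rcases le_total 0 (q ⬝ᵥ z) with hqz | hqz
  · exact ⟨z, hzS, by rw [hval]; nlinarith⟩
  · refine ⟨-z, fun k => ?_, ?_⟩
    · simpa [mulVec_neg] using hzS k
    · rw [hval]
      simp only [mulVec_neg, dotProduct_neg, neg_dotProduct, neg_neg]
      nlinarith

theorem trace_mul_vecMulVec_self {m : Type*} [Fintype m] (M : Matrix m m ℝ) (x : m → ℝ) :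
    (M * vecMulVec x x).trace = x ⬝ᵥ M *ᵥ x := by
  rw [mul_vecMulVec, trace_vecMulVec, dotProduct_comm]

/-- Strong duality for the semidefinite relaxation: a bound on the relaxed problem is certified by
a feasible pair of multipliers. -/
theorem exists_dual_feasible {m K : ℕ} {S : Fin K → Matrix (Fin m) (Fin m) ℝ}
    (hS : ∀ k, (S k).PosSemidef) {T : Set (Fin K → ℝ)} (hTconv : Convex ℝ T)
    (hTpos : ∃ t ∈ T, ∀ k, 0 < t k) {Q : Matrix (Fin m) (Fin m) ℝ} (hQ : Q.IsSymm) (q : Fin m → ℝ)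
    {s M : ℝ} (hs : 0 < s)
    (hM : ∀ W : Matrix (Fin m ⊕ Unit) (Fin m ⊕ Unit) ℝ, W.PosSemidef → ∀ t ∈ T,
      W (Sum.inr ()) (Sum.inr ()) ≤ 1 →
      (∀ k, (S k * W.submatrix Sum.inl Sum.inl).trace ≤ s * t k) → (qPlus Q q * W).trace ≤ M) :
    ∃ lam : Fin K → ℝ, ∃ μ : ℝ, (∀ k, 0 ≤ lam k) ∧ 0 ≤ μ ∧
      (blockDiagOne (∑ k, lam k • S k) μ - qPlus Q q).PosSemidef ∧ s * suppFn T lam + μ ≤ M := by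
  obtain ⟨t₀, ht₀, ht₀pos⟩ := hTpos
  let X : Set (Matrix (Fin m ⊕ Unit) (Fin m ⊕ Unit) ℝ × (Fin K → ℝ)) :=
    {p | p.1.PosSemidef ∧ p.2 ∈ T}
  let g : Option (Fin K) → Matrix (Fin m ⊕ Unit) (Fin m ⊕ Unit) ℝ × (Fin K → ℝ) → ℝ := fun j p =>
    j.elim (p.1 (Sum.inr ()) (Sum.inr ()) - 1)
      fun k => (S k * p.1.submatrix Sum.inl Sum.inl).trace - s * p.2 k
  have hX : Convex ℝ X := by
    rintro p ⟨hp, hp'⟩ r ⟨hr, hr'⟩ a b ha hb hab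
    exact ⟨(hp.smul ha).add (hr.smul hb), hTconv hp' hr' ha hb hab⟩
  have hg : ∀ j, ConvexOn ℝ X (g j) := by
    refine fun j => ⟨hX, fun p _ r _ a b _ _ hab => le_of_eq ?_⟩
    cases j with
    | none =>
      simp only [g, Option.elim, Prod.fst_add, Prod.smul_fst, Matrix.add_apply,
        Matrix.smul_apply, smul_eq_mul]
      linear_combination hab
    | some k =>
      simp only [g, Option.elim, Prod.fst_add, Prod.smul_fst, Prod.snd_add, Prod.smul_snd,
        Pi.add_apply, Pi.smul_apply, submatrix_add, submatrix_smul, Matrix.mul_add,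
        Matrix.mul_smul, trace_add, trace_smul, smul_eq_mul]
      ring
  have hh : ConcaveOn ℝ X fun p => (qPlus Q q * p.1).trace := by
    refine ⟨hX, fun p _ r _ a b _ _ _ => le_of_eq ?_⟩
    simp only [Prod.fst_add, Prod.smul_fst, Matrix.mul_add, Matrix.mul_smul, trace_add, trace_smul]
  obtain ⟨lam, hlam, hbound⟩ := exists_lagrange_multipliers_of_slater (M := M) hg hh
    (fun p hp hpg => hM p.1 hp.1 p.2 hp.2 (by simpa [g] using hpg none)
      fun k => by simpa [g] using hpg (some k))
    (x₀ := (0, t₀)) ⟨PosSemidef.zero, ht₀⟩ (by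
      rintro (_ | k)
      · simp [g]
      · simpa [g] using mul_pos hs (ht₀pos k))
  simp only [Fintype.sum_option, g, Option.elim] at hbound
  refine ⟨fun k => lam (some k), lam none, fun k => hlam _, hlam _, ?_, ?_⟩
  · refine PosSemidef.of_dotProduct_mulVec_nonneg ?_ fun x => ?_
    · refine IsHermitian.sub ?_ ?_
      · refine IsHermitian.fromBlocks ?_ (by simp) ?_
        · rw [IsHermitian, conjTranspose_sum]
          exact Finset.sum_congr rfl fun k _ => by
            rw [conjTranspose_smul, (hS k).1.eq, star_trivial]
        · ext; simp
      · rw [IsHermitian, conjTranspose_eq_transpose_of_trivial, (qPlus_isSymm hQ q).eq]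
    · obtain ⟨z, τ, rfl⟩ : ∃ (z : Fin m → ℝ) (τ : ℝ), x = Sum.elim z fun _ => τ :=
        ⟨x ∘ Sum.inl, x (Sum.inr ()), by ext i; rcases i with i | i <;> rfl⟩
      rw [star_trivial, sub_mulVec, dotProduct_sub, sumElim_dotProduct_blockDiagOne_mulVec,
        sumElim_dotProduct_qPlus_mulVec]
      have hsum : z ⬝ᵥ (∑ k, lam (some k) • S k) *ᵥ z = ∑ k, lam (some k) * (z ⬝ᵥ S k *ᵥ z) := by
        rw [sum_mulVec, dotProduct_sum]
        simp [smul_mulVec]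
      rw [hsum]
      set D := ∑ k, lam (some k) * (z ⬝ᵥ S k *ᵥ z) + lam none * τ ^ 2 -
        (z ⬝ᵥ Q *ᵥ z + 2 * τ * (q ⬝ᵥ z)) with hD
      have hray : ∀ r : ℝ, 0 ≤ r → 0 ≤ r * D + |M| := by
        intro r hr
        set v : Fin m ⊕ Unit → ℝ := Sum.elim z fun _ => τ with hv
        have h := hbound (r • vecMulVec v v, t₀) ⟨PosSemidef.smul
          (by simpa using posSemidef_vecMulVec_self_star v) hr, ht₀⟩
        have hsub : (vecMulVec v v).submatrix Sum.inl Sum.inl = vecMulVec z z := by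
          ext i j; simp [hv, vecMulVec_apply]
        have hv0 : vecMulVec v v (Sum.inr ()) (Sum.inr ()) = τ ^ 2 := by
          simp [hv, vecMulVec_apply, sq]
        simp only [submatrix_smul, Pi.smul_apply, Matrix.mul_smul, trace_smul, hsub,
          trace_mul_vecMulVec_self, Matrix.smul_apply, smul_eq_mul, hv0] at h
        rw [hv, sumElim_dotProduct_qPlus_mulVec] at h
        have hsplit : ∑ k, lam (some k) * (r * (z ⬝ᵥ S k *ᵥ z) - s * t₀ k) =
            r * ∑ k, lam (some k) * (z ⬝ᵥ S k *ᵥ z) - ∑ k, lam (some k) * (s * t₀ k) := by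
          rw [Finset.mul_sum, ← Finset.sum_sub_distrib]
          exact Finset.sum_congr rfl fun k _ => by ring
        have hst : 0 ≤ ∑ k, lam (some k) * (s * t₀ k) := Finset.sum_nonneg fun k _ =>
          mul_nonneg (hlam _) (mul_pos hs (ht₀pos k)).le
        rw [hsplit] at h
        rw [hD]
        linarith [hlam none, le_abs_self M]
      by_contra! hneg
      have := hray ((|M| + 1) / (-D)) (div_nonneg (by positivity) (by linarith))
      have e : (|M| + 1) / (-D) * D = -(|M| + 1) := by field_simp [hneg.ne]
      linarith
  · have hle : ∀ t ∈ T, ∑ k, lam (some k) * t k ≤ (M - lam none) / s := by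
      intro t ht
      have h := hbound (0, t) ⟨PosSemidef.zero, ht⟩
      simp only [submatrix_zero, Pi.zero_apply, Matrix.mul_zero, trace_zero,
        Matrix.zero_apply, zero_sub] at h
      have hsplit : ∑ k, lam (some k) * -(s * t k) = -(s * ∑ k, lam (some k) * t k) := by
        rw [Finset.mul_sum, ← Finset.sum_neg_distrib]
        exact Finset.sum_congr rfl fun k _ => by ring
      rw [hsplit] at h
      rw [le_div_iff₀ hs]
      linarith
    have hsup : suppFn T (fun k => lam (some k)) ≤ (M - lam none) / s := by
      refine csSup_le (Set.Nonempty.image _ ⟨t₀, ht₀⟩) ?_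
      rintro _ ⟨t, ht, rfl⟩
      exact hle t ht
    rw [le_div_iff₀ hs] at hsup
    linarith

theorem bddAbove_image_of_posDef {m : Type*} [Fintype m] [DecidableEq m] {M : Matrix m m ℝ}
    (hM : M.PosDef) {F : (m → ℝ) → ℝ} (hF : Continuous F) (R : ℝ) :
    BddAbove (F '' {z | z ⬝ᵥ M *ᵥ z ≤ R}) := by
  obtain ⟨B, hB⟩ := exists_transpose_mul_self_eq hM.posSemidef
  have hdet : IsUnit B.det := by
    have := hM.det_pos
    rw [hB, det_mul, det_transpose] at this
    exact isUnit_iff_ne_zero.2 fun h => by simp [h] at this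
  have hcomp : IsCompact ((B⁻¹ *ᵥ ·) '' Set.Icc (fun _ : m => -√R) (fun _ => √R)) :=
    isCompact_Icc.image (by fun_prop)
  refine (hcomp.image hF).bddAbove.mono (Set.image_mono fun z hz => ?_)
  refine ⟨B *ᵥ z, ?_, by simp [mulVec_mulVec, nonsing_inv_mul B hdet]⟩
  have h1 : (B *ᵥ z) ⬝ᵥ (B *ᵥ z) ≤ R := by
    refine le_of_eq_of_le ?_ hz
    rw [hB, ← mulVec_mulVec, dotProduct_mulVec z, ← mulVec_transpose, transpose_transpose]
  have h2 : ∀ i, |(B *ᵥ z) i| ≤ √R := fun i => by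
    refine Real.abs_le_sqrt (le_trans ?_ h1)
    rw [sq]
    exact Finset.single_le_sum (f := fun i => (B *ᵥ z) i * (B *ᵥ z) i)
      (fun i _ => mul_self_nonneg _) (Finset.mem_univ i)
  exact ⟨fun i => (abs_le.1 (h2 i)).1, fun i => (abs_le.1 (h2 i)).2⟩

theorem stmt1 {n nb K : ℕ} (hK : 1 ≤ K)
    (P : Matrix (Fin n) (Fin nb) ℝ)
    (S : Fin K → Matrix (Fin nb) (Fin nb) ℝ)
    (hS : ∀ k, (S k).PosSemidef)
    (hSsum : (∑ k, S k).PosDef)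
    (T : Set (Fin K → ℝ))
    (hTne : T.Nonempty) (hTconv : Convex ℝ T) (hTcomp : IsCompact T)
    (hTnonneg : ∀ t ∈ T, ∀ k, 0 ≤ t k)
    (hTmono : ∀ t t' : Fin K → ℝ, (∀ k, 0 ≤ t k) → (∀ k, t k ≤ t' k) → t' ∈ T → t ∈ T)
    (hTpos : ∃ t ∈ T, ∀ k, 0 < t k)
    (A : Matrix (Fin n) (Fin n) ℝ) (hA : A.IsSymm) (b : Fin n → ℝ)
    (s : ℝ) (hs : 0 < s) :
    sInf {v : ℝ | ∃ lam : Fin K → ℝ, ∃ μ : ℝ,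
        (∀ k, 0 ≤ lam k) ∧ 0 ≤ μ ∧
        (blockDiagOne (∑ k, lam k • S k) μ - qPlus (Pᵀ * A * P) (Pᵀ *ᵥ b)).PosSemidef ∧
        v = s * suppFn T lam + μ} ≤
      sSup {v : ℝ | ∃ x ∈ ellitope P S T (3 * Real.log (6 * K) * s),
        v = x ⬝ᵥ A *ᵥ x + 2 * (b ⬝ᵥ x)} := by
  have hbdd : BddAbove {v : ℝ | ∃ x ∈ ellitope P S T (3 * Real.log (6 * K) * s),
      v = x ⬝ᵥ A *ᵥ x + 2 * (b ⬝ᵥ x)} := by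
    obtain ⟨R, hR⟩ := (hTcomp.image (f := fun t => ∑ k, 3 * Real.log (6 * K) * s * t k)
      (by fun_prop)).bddAbove
    refine (bddAbove_image_of_posDef hSsum (F := fun z => (P *ᵥ z) ⬝ᵥ A *ᵥ (P *ᵥ z) +
      2 * (b ⬝ᵥ (P *ᵥ z))) (by fun_prop) R).mono ?_
    rintro _ ⟨_, ⟨z, t, ht, rfl, hz⟩, rfl⟩
    refine ⟨z, ?_, rfl⟩
    rw [Set.mem_ofPred_eq, sum_mulVec, dotProduct_sum]
    exact (Finset.sum_le_sum fun k _ => hz k).trans (hR ⟨t, ht, rfl⟩)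
  have hQ : (Pᵀ * A * P).IsSymm := by
    rw [IsSymm, transpose_mul, transpose_mul, transpose_transpose, hA.eq, Matrix.mul_assoc]
  obtain ⟨lam, μ, hlam, hμ, hpsd, hle⟩ := exists_dual_feasible hS hTconv hTpos hQ (Pᵀ *ᵥ b) hs
    (M := sSup {v : ℝ | ∃ x ∈ ellitope P S T (3 * Real.log (6 * K) * s),
      v = x ⬝ᵥ A *ᵥ x + 2 * (b ⬝ᵥ x)}) (by
    intro W hW t ht hW1 hWS
    obtain ⟨z, hz, hval⟩ := exists_rounding hK hS hQ (Pᵀ *ᵥ b) hW hW1 hWS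
    refine hval.trans (le_csSup hbdd ⟨P *ᵥ z, ⟨z, t, ht, rfl, fun k => ?_⟩, ?_⟩)
    · rw [mul_assoc _ s]; exact hz k
    · rw [mulVec_dotProduct_mulVec_mulVec, mulVec_transpose, ← dotProduct_mulVec])
  refine le_trans (csInf_le ⟨0, ?_⟩ ⟨lam, μ, hlam, hμ, hpsd, rfl⟩) hle
  rintro _ ⟨lam', μ', hlam', hμ', -, rfl⟩
  have : 0 ≤ suppFn T lam' := Real.sSup_nonneg <| by
    rintro _ ⟨t, ht, rfl⟩
    exact Finset.sum_nonneg fun k _ => mul_nonneg (hlam' k) (hTnonneg t ht k)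
  positivity
end
end

section
/- Let K ≥ 1 be an integer, P a real n×n̄ matrix, and for each k ≤ K let f_k ≥ 1 and S^{k1},…,S^{k n̄} be symmetric f_k×f_k matrices defining S_k[z] = ∑_i z_i S^{ki}, such that z = 0 whenever S_k[z] = 0 for all k; let 𝒯 ⊆ ℝ_{≥0}^K be a nonempty convex compact monotone set containing a point with all coordinates positive. Let A be a symmetric n×n matrix, b ∈ ℝ^n, s > 0, and set Q = PᵀAP, q = Pᵀb, Q_+ = [[Q, q],[qᵀ, 0]]. Then Opt_*[s] ≤ Opt[s], where Opt_*[s] = sup{ xᵀAx + 2bᵀx : x ∈ 𝒳[s] } and Opt[s] = inf{ s·φ_𝒯(λ[Λ]) + μ : Λ = (Λ_1,…,Λ_K), Λ_k ∈ S^{f_k} positive semidefinite, μ ≥ 0, Q_+ ⪯ BlockDiag(∑_k 𝒮_k^*[Λ_k], μ) }. -/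
open Matrix BigOperators

noncomputable section

/-- The spectratope `𝒳[s]`: image under `z ↦ P z` of the set of `z` such that
`S_k[z]² ⪯ s t_k I` for some `t ∈ 𝒯`, where `S_k[z] = ∑ i z_i S^{ki}`. -/
def spectratope {n nb K : ℕ} (f : Fin K → ℕ) (P : Matrix (Fin n) (Fin nb) ℝ)
    (Smat : (k : Fin K) → Fin nb → Matrix (Fin (f k)) (Fin (f k)) ℝ)
    (T : Set (Fin K → ℝ)) (s : ℝ) : Set (Fin n → ℝ) :=
  {x | ∃ z : Fin nb → ℝ, ∃ t ∈ T, x = P *ᵥ z ∧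
    ∀ k, ((s * t k) • (1 : Matrix (Fin (f k)) (Fin (f k)) ℝ)
            - (∑ i, z i • Smat k i) ^ 2).PosSemidef}

/-- `𝒮_k^*[Λ]`, the matrix with entries `Tr(Λ (S^{ki} S^{kj} + S^{kj} S^{ki})/2)`. -/
def calSstar {nb fk : ℕ} (Sm : Fin nb → Matrix (Fin fk) (Fin fk) ℝ)
    (Λ : Matrix (Fin fk) (Fin fk) ℝ) : Matrix (Fin nb) (Fin nb) ℝ :=
  Matrix.of fun i j => (Λ * ((1 / 2 : ℝ) • (Sm i * Sm j + Sm j * Sm i))).trace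

/-- `λ[Λ] = (Tr Λ_1, …, Tr Λ_K)`. -/
def lamOf {K : ℕ} {f : Fin K → ℕ}
    (Λ : (k : Fin K) → Matrix (Fin (f k)) (Fin (f k)) ℝ) : Fin K → ℝ :=
  fun k => (Λ k).trace

namespace Matrix

/-- The trace of a product of two positive semidefinite real matrices is nonnegative. -/
theorem PosSemidef.trace_mul_nonneg {ι : Type*} [Fintype ι] {A B : Matrix ι ι ℝ}
    (hA : A.PosSemidef) (hB : B.PosSemidef) : 0 ≤ (A * B).trace := by
  classical
  open scoped MatrixOrder in
  obtain ⟨C, rfl⟩ := CStarAlgebra.nonneg_iff_eq_star_mul_self.mp hA.nonneg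
  rw [star_eq_conjTranspose]
  have h := (hB.mul_mul_conjTranspose_same C).trace_nonneg
  rwa [trace_mul_comm, ← Matrix.mul_assoc] at h

/-- A Hermitian real matrix is dominated by a nonnegative multiple of any positive definite one. -/
theorem PosDef.exists_posSemidef_smul_sub {ι : Type*} [Fintype ι] {B H : Matrix ι ι ℝ}
    (hB : B.PosDef) (hH : H.IsHermitian) : ∃ c : ℝ, 0 ≤ c ∧ (c • B - H).PosSemidef := by
  have hBpos : ∀ x : ι → ℝ, x ≠ 0 → 0 < x ⬝ᵥ B *ᵥ x := fun x hx => by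
    simpa using hB.dotProduct_mulVec_pos hx
  have hcont : ∀ M : Matrix ι ι ℝ, Continuous fun x : ι → ℝ => x ⬝ᵥ M *ᵥ x := fun M => by
    fun_prop
  have hne : ∀ x ∈ Metric.sphere (0 : ι → ℝ) 1, x ≠ 0 := fun x hx =>
    ne_zero_of_mem_unit_sphere ⟨x, hx⟩
  obtain ⟨C, hC⟩ := (isCompact_sphere (0 : ι → ℝ) 1).bddAbove_image
    (f := fun x => (x ⬝ᵥ H *ᵥ x) / (x ⬝ᵥ B *ᵥ x))
    ((hcont H).continuousOn.div (hcont B).continuousOn fun x hx => (hBpos x (hne x hx)).ne')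
  refine ⟨max C 0, le_max_right _ _, .of_dotProduct_mulVec_nonneg ?_ fun x => ?_⟩
  · refine IsHermitian.sub ?_ hH
    rw [IsHermitian, conjTranspose_smul, hB.isHermitian.eq, star_trivial]
  · rcases eq_or_ne x 0 with rfl | hx
    · simp
    have hxn : ‖x‖ ≠ 0 := norm_ne_zero_iff.mpr hx
    have hmem : ‖x‖⁻¹ • x ∈ Metric.sphere (0 : ι → ℝ) 1 := by
      simp [norm_smul, hxn]
    have h := hC ⟨_, hmem, rfl⟩
    simp only [mulVec_smul, dotProduct_smul, smul_dotProduct, smul_eq_mul] at h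
    rw [mul_div_mul_left _ _ (inv_ne_zero hxn), mul_div_mul_left _ _ (inv_ne_zero hxn),
      div_le_iff₀ (hBpos x hx)] at h
    have := mul_le_mul_of_nonneg_right (le_max_left C 0) (hBpos x hx).le
    simp only [star_trivial, sub_mulVec, smul_mulVec, dotProduct_sub, dotProduct_smul, smul_eq_mul]
    linarith

end Matrix

theorem dotProduct_calSstar_mulVec {nb fk : ℕ} (Sm : Fin nb → Matrix (Fin fk) (Fin fk) ℝ)
    (Λ : Matrix (Fin fk) (Fin fk) ℝ) (z : Fin nb → ℝ) :
    z ⬝ᵥ calSstar Sm Λ *ᵥ z = (Λ * (∑ i, z i • Sm i) ^ 2).trace := by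
  have hr : (Λ * (∑ i, z i • Sm i) ^ 2).trace
      = ∑ i, ∑ j, z i * z j * (Λ * (Sm i * Sm j)).trace := by
    rw [sq, Finset.sum_mul_sum]
    simp only [Finset.mul_sum, trace_sum, smul_mul_assoc, mul_smul_comm, trace_smul, smul_eq_mul]
    refine Finset.sum_congr rfl fun i _ => Finset.sum_congr rfl fun j _ => ?_
    ring
  have hl : z ⬝ᵥ calSstar Sm Λ *ᵥ z
      = (1 / 2) * ∑ i, ∑ j, z i * z j * (Λ * (Sm i * Sm j)).trace
        + (1 / 2) * ∑ i, ∑ j, z i * z j * (Λ * (Sm j * Sm i)).trace := by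
    simp only [dotProduct, mulVec, calSstar, of_apply, Finset.mul_sum, ← Finset.sum_add_distrib,
      mul_smul_comm, trace_smul, mul_add, trace_add, smul_eq_mul]
    refine Finset.sum_congr rfl fun i _ => Finset.sum_congr rfl fun j _ => ?_
    ring
  have hswap : ∑ i, ∑ j, z i * z j * (Λ * (Sm j * Sm i)).trace
      = ∑ i, ∑ j, z i * z j * (Λ * (Sm i * Sm j)).trace := by
    rw [Finset.sum_comm]
    simp only [mul_comm (z _) (z _)]
  rw [hl, hr, hswap]
  ring

theorem isSymm_calSstar {nb fk : ℕ} (Sm : Fin nb → Matrix (Fin fk) (Fin fk) ℝ)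
    (Λ : Matrix (Fin fk) (Fin fk) ℝ) : (calSstar Sm Λ).IsSymm := by
  ext i j
  simp only [calSstar, transpose_apply, of_apply, add_comm]

theorem calSstar_smul {nb fk : ℕ} (Sm : Fin nb → Matrix (Fin fk) (Fin fk) ℝ)
    (c : ℝ) (Λ : Matrix (Fin fk) (Fin fk) ℝ) :
    calSstar Sm (c • Λ) = c • calSstar Sm Λ := by
  ext i j
  simp [calSstar]

theorem dotProduct_sum_calSstar_mulVec {nb K : ℕ} {f : Fin K → ℕ}
    (Smat : (k : Fin K) → Fin nb → Matrix (Fin (f k)) (Fin (f k)) ℝ)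
    (Λ : (k : Fin K) → Matrix (Fin (f k)) (Fin (f k)) ℝ) (z : Fin nb → ℝ) :
    z ⬝ᵥ (∑ k, calSstar (Smat k) (Λ k)) *ᵥ z
      = ∑ k, (Λ k * (∑ i, z i • Smat k i) ^ 2).trace := by
  rw [sum_mulVec, dotProduct_sum]
  exact Finset.sum_congr rfl fun k _ => dotProduct_calSstar_mulVec _ _ _

theorem dotProduct_blockDiagOne_mulVec {m : ℕ} (M : Matrix (Fin m) (Fin m) ℝ) (μ : ℝ)
    (z : Fin m → ℝ) (τ : Unit → ℝ) :
    Sum.elim z τ ⬝ᵥ blockDiagOne M μ *ᵥ Sum.elim z τ = z ⬝ᵥ M *ᵥ z + μ * τ () ^ 2 := by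
  have h : (Matrix.of fun _ _ => μ : Matrix Unit Unit ℝ) *ᵥ τ = fun _ => μ * τ () := by
    ext; simp [mulVec, dotProduct]
  simp [blockDiagOne, fromBlocks_mulVec, h, dotProduct]
  ring

theorem dotProduct_qPlus_mulVec {m : ℕ} (Q : Matrix (Fin m) (Fin m) ℝ) (q z : Fin m → ℝ) :
    Sum.elim z (fun _ => 1) ⬝ᵥ qPlus Q q *ᵥ Sum.elim z (fun _ => 1)
      = z ⬝ᵥ Q *ᵥ z + 2 * (q ⬝ᵥ z) := by
  simp [qPlus, mulVec, dotProduct, mul_add, Finset.sum_add_distrib,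
    mul_comm (z _) (q _)]
  ring

/-- The nondegeneracy condition makes `BlockDiag(∑ k, 𝒮_k^*[I], 1)` positive definite. -/
theorem posDef_blockDiagOne_sum_calSstar_one {nb K : ℕ} {f : Fin K → ℕ}
    (Smat : (k : Fin K) → Fin nb → Matrix (Fin (f k)) (Fin (f k)) ℝ)
    (hSm : ∀ k i, (Smat k i).IsSymm)
    (hnd : ∀ z : Fin nb → ℝ, (∀ k, (∑ i, z i • Smat k i) = 0) → z = 0) :
    (blockDiagOne (∑ k, calSstar (Smat k) 1) 1).PosDef := by
  have hsq : ∀ (z : Fin nb → ℝ) k, (1 * (∑ i, z i • Smat k i) ^ 2).trace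
      = ((∑ i, z i • Smat k i)ᴴ * (∑ i, z i • Smat k i)).trace := fun z k => by
    have : (∑ i, z i • Smat k i)ᴴ = ∑ i, z i • Smat k i := by
      simp only [conjTranspose_eq_transpose_of_trivial, transpose_sum, transpose_smul,
        (hSm k _).eq]
    rw [this, one_mul, sq]
  have hnn : ∀ (z : Fin nb → ℝ) k, 0 ≤ (1 * (∑ i, z i • Smat k i) ^ 2).trace := fun z k => by
    rw [hsq]
    exact (posSemidef_conjTranspose_mul_self _).trace_nonneg
  refine .of_dotProduct_mulVec_pos ?_ fun w hw => ?_
  · refine IsHermitian.fromBlocks ?_ (by simp) ?_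
    · simp only [IsHermitian, conjTranspose_eq_transpose_of_trivial, transpose_sum,
        (isSymm_calSstar _ _).eq]
    · ext; simp
  · obtain ⟨z, τ, rfl⟩ : ∃ z τ, w = Sum.elim z τ := ⟨_, _, (Sum.elim_comp_inl_inr w).symm⟩
    rw [star_trivial, dotProduct_blockDiagOne_mulVec, dotProduct_sum_calSstar_mulVec, one_mul]
    have hsum := Finset.sum_nonneg fun k (_ : k ∈ Finset.univ) => hnn z k
    refine lt_of_le_of_ne (add_nonneg hsum (sq_nonneg _)) fun h0 => hw ?_
    have hτ : τ () = 0 := by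
      have := sq_nonneg (τ ())
      exact pow_eq_zero_iff two_ne_zero |>.mp (by linarith)
    have hz : z = 0 := by
      refine hnd z fun k => ?_
      have hs0 : ∑ k, (1 * (∑ i, z i • Smat k i) ^ 2).trace = 0 := by simpa [hτ] using h0.symm
      have := (Finset.sum_eq_zero_iff_of_nonneg fun k _ => hnn z k).mp hs0 k (Finset.mem_univ k)
      rwa [hsq, trace_conjTranspose_mul_self_eq_zero_iff] at this
    subst hz
    ext (i | i)
    · simp
    · simpa using hτ

theorem sum_mul_le_suppFn {K : ℕ} {T : Set (Fin K → ℝ)} (hT : IsCompact T)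
    (lam : Fin K → ℝ) {t : Fin K → ℝ} (ht : t ∈ T) : ∑ k, lam k * t k ≤ suppFn T lam :=
  le_csSup (hT.bddAbove_image (by fun_prop)) ⟨t, ht, rfl⟩

theorem stmt2 {n nb K : ℕ} (hK : 1 ≤ K)
    (P : Matrix (Fin n) (Fin nb) ℝ)
    (f : Fin K → ℕ) (hf : ∀ k, 1 ≤ f k)
    (Smat : (k : Fin K) → Fin nb → Matrix (Fin (f k)) (Fin (f k)) ℝ)
    (hSm : ∀ k i, (Smat k i).IsSymm)
    (hnd : ∀ z : Fin nb → ℝ, (∀ k, (∑ i, z i • Smat k i) = 0) → z = 0)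
    (T : Set (Fin K → ℝ))
    (hTne : T.Nonempty) (hTconv : Convex ℝ T) (hTcomp : IsCompact T)
    (hTnonneg : ∀ t ∈ T, ∀ k, 0 ≤ t k)
    (hTmono : ∀ t t' : Fin K → ℝ, (∀ k, 0 ≤ t k) → (∀ k, t k ≤ t' k) → t' ∈ T → t ∈ T)
    (hTpos : ∃ t ∈ T, ∀ k, 0 < t k)
    (A : Matrix (Fin n) (Fin n) ℝ) (hA : A.IsSymm) (b : Fin n → ℝ)
    (s : ℝ) (hs : 0 < s) :
    sSup {v : ℝ | ∃ x ∈ spectratope f P Smat T s, v = x ⬝ᵥ A *ᵥ x + 2 * (b ⬝ᵥ x)} ≤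
      sInf {v : ℝ | ∃ Λ : (k : Fin K) → Matrix (Fin (f k)) (Fin (f k)) ℝ, ∃ μ : ℝ,
        (∀ k, (Λ k).PosSemidef) ∧ 0 ≤ μ ∧
        (blockDiagOne (∑ k, calSstar (Smat k) (Λ k)) μ
          - qPlus (Pᵀ * A * P) (Pᵀ *ᵥ b)).PosSemidef ∧
        v = s * suppFn T (lamOf Λ) + μ} := by
  obtain ⟨t₀, ht₀⟩ := hTne
  refine csSup_le ⟨_, 0, ⟨0, t₀, ht₀, by simp, fun k => ?_⟩, rfl⟩ ?_
  · simpa using PosSemidef.one.smul (mul_nonneg hs.le (hTnonneg t₀ ht₀ k))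
  rintro _ ⟨_, ⟨z, t, ht, rfl, hz⟩, rfl⟩
  refine le_csInf ?_ ?_
  · have hH : (qPlus (Pᵀ * A * P) (Pᵀ *ᵥ b)).IsHermitian := by
      refine IsHermitian.fromBlocks ?_ (by ext; simp) (by simp)
      rw [IsHermitian, conjTranspose_eq_transpose_of_trivial, transpose_mul, transpose_mul,
        hA.eq, transpose_transpose, Matrix.mul_assoc]
    obtain ⟨c, hc, hpsd⟩ :=
      (posDef_blockDiagOne_sum_calSstar_one Smat hSm hnd).exists_posSemidef_smul_sub hH
    refine ⟨_, fun k => c • 1, c, fun k => PosSemidef.one.smul hc, hc, ?_, rfl⟩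
    convert hpsd using 2
    simp only [blockDiagOne, fromBlocks_smul, calSstar_smul, Finset.smul_sum, smul_zero]
    congr 1
    ext; simp
  · rintro _ ⟨Λ, μ, hΛ, -, hpsd, rfl⟩
    have h := hpsd.dotProduct_mulVec_nonneg (Sum.elim z fun _ => 1)
    rw [star_trivial, sub_mulVec, dotProduct_sub, dotProduct_blockDiagOne_mulVec,
      dotProduct_qPlus_mulVec, dotProduct_sum_calSstar_mulVec] at h
    have hk : ∑ k, (Λ k * (∑ i, z i • Smat k i) ^ 2).trace
        ≤ s * ∑ k, lamOf Λ k * t k := by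
      rw [Finset.mul_sum]
      refine Finset.sum_le_sum fun k _ => ?_
      have := (hΛ k).trace_mul_nonneg (hz k)
      rw [mul_sub, trace_sub, mul_smul_comm, trace_smul, mul_one, smul_eq_mul] at this
      simp only [lamOf]
      linarith
    have hsupp := mul_le_mul_of_nonneg_left (sum_mul_le_suppFn hTcomp (lamOf Λ) ht) hs.le
    have hquad : (P *ᵥ z) ⬝ᵥ A *ᵥ (P *ᵥ z) = z ⬝ᵥ (Pᵀ * A * P) *ᵥ z := by
      rw [← mulVec_mulVec, ← mulVec_mulVec, dotProduct_mulVec z, vecMul_transpose]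
    have hlin : b ⬝ᵥ (P *ᵥ z) = (Pᵀ *ᵥ b) ⬝ᵥ z := by
      rw [dotProduct_mulVec, mulVec_transpose]
    rw [hquad, hlin]
    linarith
end
end

section
/- Let K ≥ 1 be an integer, P a real n×n̄ matrix, S_1,…,S_K symmetric positive semidefinite n̄×n̄ matrices with S_1+⋯+S_K positive definite, 𝒯 ⊆ ℝ_{≥0}^K a nonempty convex compact monotone set containing a point with all coordinates positive, and ρ > 0. Let X be a symmetric n×n matrix, x ∈ ℝ^n, ξ ∈ ℝ. If there exist λ ∈ ℝ^K with λ ≥ 0 and τ ∈ ℝ such that the block matrix [[∑_k λ_k S_k − PᵀXP, −Pᵀx],[−xᵀP, τ]] is positive semidefinite and ρ·φ_𝒯(λ) + τ ≤ ξ, then for every ζ ∈ 𝒳[ρ] one has ζᵀXζ + 2xᵀζ ≤ ξ. -/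
open Matrix BigOperators

noncomputable section

theorem dotProduct_fromBlocks_elim_one {m : ℕ} (M : Matrix (Fin m) (Fin m) ℝ) (q : Fin m → ℝ)
    (τ : ℝ) (z : Fin m → ℝ) :
    (Sum.elim z fun _ => 1) ⬝ᵥ
      (Matrix.fromBlocks M (Matrix.of fun i (_ : Unit) => q i)
        (Matrix.of fun (_ : Unit) j => q j) (Matrix.of fun _ _ => τ)) *ᵥ
        (Sum.elim z fun _ => 1) = z ⬝ᵥ M *ᵥ z + 2 * (q ⬝ᵥ z) + τ := by
  have hcol : (Matrix.of fun i (_ : Unit) => q i) *ᵥ (fun _ => (1 : ℝ)) = q := by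
    ext i
    simp [mulVec, dotProduct]
  have hrow : (fun _ : Unit => (1 : ℝ)) ⬝ᵥ (Matrix.of fun (_ : Unit) j => q j) *ᵥ z = q ⬝ᵥ z := by
    simp [mulVec, dotProduct]
  have hcorner : (fun _ : Unit => (1 : ℝ)) ⬝ᵥ
      (Matrix.of fun (_ _ : Unit) => τ) *ᵥ (fun _ => (1 : ℝ)) = τ := by
    simp [mulVec, dotProduct]
  rw [fromBlocks_mulVec, sumElim_dotProduct_sumElim, Sum.elim_comp_inl, Sum.elim_comp_inr,
    dotProduct_add, dotProduct_add, hcol, hrow, hcorner, dotProduct_comm z q]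
  ring

theorem stmt4 {n nb K : ℕ} (hK : 1 ≤ K)
    (P : Matrix (Fin n) (Fin nb) ℝ)
    (S : Fin K → Matrix (Fin nb) (Fin nb) ℝ)
    (hS : ∀ k, (S k).PosSemidef)
    (hSsum : (∑ k, S k).PosDef)
    (T : Set (Fin K → ℝ))
    (hTne : T.Nonempty) (hTconv : Convex ℝ T) (hTcomp : IsCompact T)
    (hTnonneg : ∀ t ∈ T, ∀ k, 0 ≤ t k)
    (hTmono : ∀ t t' : Fin K → ℝ, (∀ k, 0 ≤ t k) → (∀ k, t k ≤ t' k) → t' ∈ T → t ∈ T)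
    (hTpos : ∃ t ∈ T, ∀ k, 0 < t k)
    (ρ : ℝ) (hρ : 0 < ρ)
    (X : Matrix (Fin n) (Fin n) ℝ) (hX : X.IsSymm) (x : Fin n → ℝ) (ξ : ℝ)
    (hfeas : ∃ lam : Fin K → ℝ, ∃ τ : ℝ, (∀ k, 0 ≤ lam k) ∧
      (Matrix.fromBlocks ((∑ k, lam k • S k) - Pᵀ * X * P)
        (Matrix.of fun i (_ : Unit) => -(Pᵀ *ᵥ x) i)
        (Matrix.of fun (_ : Unit) j => -(Pᵀ *ᵥ x) j)
        (Matrix.of fun _ _ => τ)).PosSemidef ∧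
      ρ * suppFn T lam + τ ≤ ξ) :
    ∀ ζ ∈ ellitope P S T ρ, ζ ⬝ᵥ X *ᵥ ζ + 2 * (x ⬝ᵥ ζ) ≤ ξ := by
  obtain ⟨lam, τ, hlam, hpsd, hξ⟩ := hfeas
  rintro ζ ⟨z, t, ht, rfl, hz⟩
  have hquad := dotProduct_fromBlocks_elim_one
    ((∑ k, lam k • S k) - Pᵀ * X * P) (-(Pᵀ *ᵥ x)) τ z
  have hnonneg := hpsd.dotProduct_mulVec_nonneg (Sum.elim z fun _ => 1)
  have hsum : z ⬝ᵥ (∑ k, lam k • S k) *ᵥ z = ∑ k, lam k * (z ⬝ᵥ S k *ᵥ z) := by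
    simp [sum_mulVec, dotProduct_sum, smul_mulVec]
  have hX' : z ⬝ᵥ (Pᵀ * X * P) *ᵥ z = (P *ᵥ z) ⬝ᵥ X *ᵥ (P *ᵥ z) := by
    rw [← mulVec_mulVec, ← mulVec_mulVec, dotProduct_mulVec, vecMul_transpose]
  have hx : (Pᵀ *ᵥ x) ⬝ᵥ z = x ⬝ᵥ P *ᵥ z := by
    rw [mulVec_transpose, dotProduct_mulVec]
  have hbound : ∑ k, lam k * (z ⬝ᵥ S k *ᵥ z) ≤ ρ * suppFn T lam :=
    calc ∑ k, lam k * (z ⬝ᵥ S k *ᵥ z) ≤ ∑ k, lam k * (ρ * t k) :=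
          Finset.sum_le_sum fun k _ => mul_le_mul_of_nonneg_left (hz k) (hlam k)
      _ = ρ * ∑ k, lam k * t k := by
          rw [Finset.mul_sum]
          exact Finset.sum_congr rfl fun k _ => mul_left_comm _ _ _
      _ ≤ ρ * suppFn T lam :=
          mul_le_mul_of_nonneg_left (sum_mul_le_suppFn hTcomp lam ht) hρ.le
  rw [star_trivial] at hnonneg
  simp only [Pi.neg_apply] at hquad
  rw [hquad, sub_mulVec, dotProduct_sub, neg_dotProduct, hsum, hX', hx] at hnonneg
  linarith
end
end
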